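/- arXiv:2105.10091 — 8 statements merged into one kernel-verified Lean document; each statement's English description precedes it below -/
import Mathlib

section
/- Let n ≥ 1, let U ⊆ ℝⁿ be an open set that is star-shaped about the origin (i.e. x ∈ U and t ∈ [0,1] imply t·x ∈ U), let j ≥ 1 be an integer, let ρ : U → ℝ be continuously differentiable and everywhere positive, let g : U → ℂ be continuous, and let f : U → ℂ be continuously differentiable. Suppose that for all x ∈ U: Σ_{i=1}^n x_i ∂_i f(x) + ( j + ρ(x)^{−1} Σ_{i=1}^n x_i ∂_i ρ(x) ) · f(x) = g(x). Then for all x ∈ U: f(x) = ρ(x)^{−1} ∫₀¹ t^{j−1} ρ(t·x) g(t·x) dt. -/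
/-!
For fixed `x ∈ U`, put `φ t = t ^ j * ρ (t x) * f (t x)`. Since the Euler field at `t x` is
`t • d/dt`, multiplying the transport equation at `t x` by the integrating factor
`t ^ (j - 1) * ρ (t x)` says exactly that `φ' t = t ^ (j - 1) * ρ (t x) * g (t x)` on `[0, 1]`.
As `j ≥ 1`, `φ 0 = 0`, so the fundamental theorem of calculus gives
`ρ x * f x = φ 1 = ∫₀¹ t ^ (j - 1) * ρ (t x) * g (t x) dt`.
-/


open MeasureTheory Set

/-- A real-linear map evaluated at `y` through its values on the standard basis. -/
lemma sum_coord_smul_apply_single {n : ℕ} {F : Type*} [NormedAddCommGroup F] [NormedSpace ℝ F]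
    (L : EuclideanSpace ℝ (Fin n) →L[ℝ] F) (y : EuclideanSpace ℝ (Fin n)) :
    ∑ i : Fin n, y i • L (EuclideanSpace.single i (1 : ℝ)) = L y := by
  conv_rhs => rw [← (EuclideanSpace.basisFun (Fin n) ℝ).sum_repr y]
  simp [map_sum]

/-- solution formula for the transport equation along radial rays. If `U ⊆ ℝⁿ` is
open and star-shaped about `0`, `ρ` is `C¹` and positive, `g` continuous, `f` is `C¹`, and
`Σᵢ xᵢ ∂ᵢf(x) + (j + ρ(x)⁻¹ Σᵢ xᵢ ∂ᵢρ(x))·f(x) = g(x)` on `U`, then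
`f(x) = ρ(x)⁻¹ ∫₀¹ t^(j−1) ρ(tx) g(tx) dt` on `U`. -/
theorem transport_equation_solution_formula
    (n : ℕ) (hn : 1 ≤ n) (U : Set (EuclideanSpace ℝ (Fin n)))
    (hU : IsOpen U) (hstar : ∀ x ∈ U, ∀ t ∈ Icc (0 : ℝ) 1, t • x ∈ U)
    (j : ℕ) (hj : 1 ≤ j)
    (ρ : EuclideanSpace ℝ (Fin n) → ℝ) (hρ : ContDiffOn ℝ 1 ρ U)
    (hρpos : ∀ x ∈ U, 0 < ρ x)
    (g : EuclideanSpace ℝ (Fin n) → ℂ) (hg : ContinuousOn g U)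
    (f : EuclideanSpace ℝ (Fin n) → ℂ) (hf : ContDiffOn ℝ 1 f U)
    (hode : ∀ x ∈ U,
      (∑ i : Fin n, (x i : ℂ) * fderiv ℝ f x (EuclideanSpace.single i (1 : ℝ))) +
        ((j : ℂ) + (((ρ x)⁻¹ *
            ∑ i : Fin n, x i * fderiv ℝ ρ x (EuclideanSpace.single i (1 : ℝ)) : ℝ) : ℂ)) * f x
        = g x) :
    ∀ x ∈ U, f x = (((ρ x)⁻¹ : ℝ) : ℂ) *
      ∫ t in Ioc (0 : ℝ) 1, ((t ^ (j - 1) * ρ (t • x) : ℝ) : ℂ) * g (t • x) := by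
  intro x hx
  obtain ⟨k, rfl⟩ : ∃ k, j = k + 1 := ⟨j - 1, by omega⟩
  rw [Nat.add_sub_cancel, ← intervalIntegral.integral_of_le zero_le_one]
  have hray : ∀ t : ℝ, HasDerivAt (fun s : ℝ => s • x) x t := fun t => by
    simpa using (hasDerivAt_id t).smul_const x
  have hderiv : ∀ t ∈ uIcc (0 : ℝ) 1,
      HasDerivAt (fun t : ℝ => ((t ^ (k + 1) * ρ (t • x) : ℝ) : ℂ) * f (t • x))
        (((t ^ k * ρ (t • x) : ℝ) : ℂ) * g (t • x)) t := by
    intro t ht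
    rw [uIcc_of_le zero_le_one] at ht
    have htU := hstar x hx t ht
    have hnhds := hU.mem_nhds htU
    have hfd := ((hf.contDiffAt hnhds).differentiableAt one_ne_zero).hasFDerivAt
    have hρd := ((hρ.contDiffAt hnhds).differentiableAt one_ne_zero).hasFDerivAt
    have hf1 := hfd.comp_hasDerivAt t (hray t)
    have hρ1 := hρd.comp_hasDerivAt t (hray t)
    have hprod := (((hasDerivAt_pow (k + 1) t).mul hρ1).ofReal_comp).mul hf1
    have hρne : ((ρ (t • x) : ℝ) : ℂ) ≠ 0 := by
      exact_mod_cast (hρpos _ htU).ne'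
    have hsf := sum_coord_smul_apply_single (fderiv ℝ f (t • x)) (t • x)
    have hsρ := sum_coord_smul_apply_single (fderiv ℝ ρ (t • x)) (t • x)
    rw [map_smul] at hsf hsρ
    simp only [Complex.real_smul] at hsf
    simp only [smul_eq_mul] at hsρ
    refine hprod.congr_deriv ?_
    rw [← hode _ htU, hsf, hsρ]
    simp only [Function.comp_apply, Nat.add_sub_cancel]
    push_cast
    field_simp
    simp
    ring
  have hcont : ContinuousOn
      (fun t : ℝ => ((t ^ k * ρ (t • x) : ℝ) : ℂ) * g (t • x)) (uIcc (0 : ℝ) 1) := by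
    rw [uIcc_of_le zero_le_one]
    have hmaps : MapsTo (fun t : ℝ => t • x) (Icc 0 1) U := fun t ht => hstar x hx t ht
    have hc : ContinuousOn (fun t : ℝ => t • x) (Icc 0 1) := by fun_prop
    have h1 := hρ.continuousOn.comp hc hmaps
    have h2 := hg.comp hc hmaps
    exact (Complex.continuous_ofReal.comp_continuousOn
      ((continuous_pow k).continuousOn.mul h1)).mul h2
  rw [intervalIntegral.integral_eq_sub_of_hasDerivAt hderiv hcont.intervalIntegrable]
  have hρne : ((ρ x : ℝ) : ℂ) ≠ 0 := by
    exact_mod_cast (hρpos _ hx).ne'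
  simp [hρne]
end

section
/- Let (V, ⟨·,·⟩) be a finite-dimensional real inner product space and let B : V × V × V → ℝ be an alternating trilinear form. Let B_o : V → End(V) be the (unique) map with ⟨B_o(X)Y, Z⟩ = 2·B(X,Y,Z) for all X, Y, Z ∈ V. Then for all W, X, Y, Z ∈ V: ⟨(B_o(W)∘B_o(X) − B_o(X)∘B_o(W))(Y), Z⟩ = ⟨(B_o(Y)∘B_o(Z) − B_o(Z)∘B_o(Y))(W), X⟩. Equivalently, the End(V)-valued alternating 2-form B_o²(X,Y) := [B_o(X), B_o(Y)] satisfies (B_o²)^⊤ = B_o², where for an End(V)-valued 2-form A the 2-form A^⊤ is defined by ⟨A^⊤(X,Y)Z, W⟩ = ⟨A(Z,W)X, Y⟩. -/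
open RealInnerProductSpace

/-!
Since `B` is alternating, each `Bo X` is skew-adjoint and `Bo X Y = -Bo Y X`. Skew-adjointness gives
`⟪[Bo W, Bo X] Y, Z⟫ = ⟪Bo W Y, Bo X Z⟫ - ⟪Bo X Y, Bo W Z⟫`, and the antisymmetry of `Bo` together
with the symmetry of the inner product shows that the right-hand side is unchanged under
`(W, X, Y, Z) ↦ (Y, Z, W, X)`.
-/

/-- For an alternating trilinear form `B` on a finite-dimensional real inner
product space, with `B_o` determined by `⟪B_o(X)Y, Z⟫ = 2B(X,Y,Z)`, the `End(V)`-valued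
2-form `B_o²(X,Y) = [B_o(X), B_o(Y)]` satisfies `(B_o²)^⊤ = B_o²`. -/
theorem Bo_squared_transpose_symmetric
    (V : Type*) [NormedAddCommGroup V] [InnerProductSpace ℝ V] [FiniteDimensional ℝ V]
    (B : AlternatingMap ℝ V ℝ (Fin 3))
    (Bo : V →ₗ[ℝ] V →ₗ[ℝ] V)
    (hBo : ∀ X Y Z : V, ⟪Bo X Y, Z⟫ = 2 * B ![X, Y, Z]) :
    ∀ W X Y Z : V,
      ⟪(Bo W ∘ₗ Bo X - Bo X ∘ₗ Bo W) Y, Z⟫ =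
        ⟪(Bo Y ∘ₗ Bo Z - Bo Z ∘ₗ Bo Y) W, X⟫ := by
  have hB₁ : ∀ X Y Z : V, B ![Y, X, Z] = -B ![X, Y, Z] := by
    intro X Y Z
    have h := B.map_swap ![X, Y, Z] (i := 0) (j := 1) (by decide)
    rw [← h]
    congr 1
    ext i
    fin_cases i <;> rfl
  have hB₂ : ∀ X Y Z : V, B ![X, Z, Y] = -B ![X, Y, Z] := by
    intro X Y Z
    have h := B.map_swap ![X, Y, Z] (i := 1) (j := 2) (by decide)
    rw [← h]
    congr 1
    ext i
    fin_cases i <;> rfl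
  have hanti : ∀ X Y : V, Bo X Y = -Bo Y X := by
    intro X Y
    refine ext_inner_right ℝ fun Z => ?_
    rw [inner_neg_left, hBo, hBo, hB₁ Y X Z]
    ring
  have hskew : ∀ X Y Z : V, ⟪Bo X Y, Z⟫ = -⟪Y, Bo X Z⟫ := by
    intro X Y Z
    rw [real_inner_comm (Bo X Z) Y, hBo, hBo, hB₂ X Z Y]
    ring
  intro W X Y Z
  simp only [LinearMap.sub_apply, LinearMap.comp_apply, inner_sub_left]
  rw [hskew W (Bo X Y), hskew X (Bo W Y), hskew Y (Bo Z W), hskew Z (Bo Y W),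
    hanti Z W, hanti Y X, hanti Y W, hanti Z X]
  simp only [inner_neg_left, inner_neg_right, neg_neg]
  rw [real_inner_comm (Bo W Z) (Bo X Y)]
end

section
/- Let (V, ⟨·,·⟩) be a finite-dimensional real inner product space and let C be a linear map assigning to each W ∈ V an alternating trilinear form C_W on V. Define the 4-linear form ν by ν(W,X,Y,Z) = C_W(X,Y,Z) − C_X(W,Y,Z) + C_Y(W,X,Z) − C_Z(W,X,Y); for each W let (C_W)_o : V → End(V) be determined by ⟨(C_W)_o(X)Y, Z⟩ = 2·C_W(X,Y,Z); define the End(V)-valued 2-form D by D(W,X) = (C_W)_o(X) − (C_X)_o(W); and define ν_o by ⟨ν_o(W,X)Y, Z⟩ = 2·ν(W,X,Y,Z). Then for all W, X, Y, Z ∈ V: ⟨ν_o(W,X)Y, Z⟩ = ⟨D(W,X)Y, Z⟩ + ⟨D(Y,Z)W, X⟩; that is, ν_o = D + D^⊤, where ⟨D^⊤(W,X)Y, Z⟩ = ⟨D(Y,Z)W, X⟩. -/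
open RealInnerProductSpace

/-- An alternating trilinear form is cyclically invariant: a 3-cycle is an even permutation. -/
theorem alternating_three_cyclic {V : Type*} [AddCommGroup V] [Module ℝ V]
    (f : AlternatingMap ℝ V ℝ (Fin 3)) (a b c : V) : f ![c, a, b] = f ![a, b, c] := by
  have h1 := f.map_swap ![a, b, c] (i := 0) (j := 2) (by decide)
  have h2 := f.map_swap ![c, b, a] (i := 1) (j := 2) (by decide)
  have e1 : ![a, b, c] ∘ Equiv.swap (0 : Fin 3) 2 = ![c, b, a] := by
    ext i; fin_cases i <;> rfl
  have e2 : ![c, b, a] ∘ Equiv.swap (1 : Fin 3) 2 = ![c, a, b] := by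
    ext i; fin_cases i <;> rfl
  rw [e1] at h1
  rw [e2] at h2
  rw [h2, h1, neg_neg]

/-- pointwise form of `(dB)_o = d_{∇}B_o + (d_{∇}B_o)^⊤`. Given a linear map
`C` assigning to each `W` an alternating trilinear form `C_W`, with `(C_W)_o` determined by
`⟪(C_W)_o(X)Y, Z⟫ = 2 C_W(X,Y,Z)`, the 4-linear antisymmetrization
`ν(W,X,Y,Z) = C_W(X,Y,Z) − C_X(W,Y,Z) + C_Y(W,X,Z) − C_Z(W,X,Y)` satisfies
`ν_o = D + D^⊤` where `D(W,X) = (C_W)_o(X) − (C_X)_o(W)`. -/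
theorem nu_o_eq_D_add_D_transpose
    (V : Type*) [NormedAddCommGroup V] [InnerProductSpace ℝ V] [FiniteDimensional ℝ V]
    (C : V →ₗ[ℝ] AlternatingMap ℝ V ℝ (Fin 3))
    (Co : V → V → V → V)
    (hCo : ∀ W X Y Z : V, ⟪Co W X Y, Z⟫ = 2 * C W ![X, Y, Z]) :
    ∀ W X Y Z : V,
      2 * (C W ![X, Y, Z] - C X ![W, Y, Z] + C Y ![W, X, Z] - C Z ![W, X, Y]) =
        ⟪Co W X Y - Co X W Y, Z⟫ + ⟪Co Y Z W - Co Z Y W, X⟫ := by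
  intro W X Y Z
  rw [inner_sub_left, inner_sub_left, hCo, hCo, hCo, hCo,
    alternating_three_cyclic (C Y) W X Z, alternating_three_cyclic (C Z) W X Y]
  ring
end

section
/- Let (V, ⟨·,·⟩) be a 4-dimensional real inner product space, let A : V × V → End(V) be an alternating bilinear map such that each A(X,Y) is skew-adjoint, and let ν be an alternating 4-linear form on V. Let ν_o be determined by ⟨ν_o(X,Y)Z, W⟩ = 2·ν(X,Y,Z,W), and define the trace-wedge 4-form tr(A∧ν_o) on vectors X₁,…,X₄ by (1/4)·Σ_{σ∈S₄} sgn(σ)·tr( A(X_{σ(1)},X_{σ(2)}) ∘ ν_o(X_{σ(3)},X_{σ(4)}) ). Then tr(A∧ν_o) = 2·κ_A·ν, where κ_A = Σ_{a,b=1}^{4} ⟨A(e_a,e_b)e_b, e_a⟩ for any orthonormal basis e₁,…,e₄ of V. -/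
open RealInnerProductSpace

/-!
Both sides are alternating 4-forms on a 4-dimensional space, hence multiples of the determinant
form of `e`, so it suffices to compare them on `e` itself. For `f = e ∘ σ`, expanding
`tr(A(f₀,f₁) ∘ ν_o(f₂,f₃))` in the orthonormal basis `f` gives
`-2 ∑_{c,d} ⟪A(f₀,f₁)f_c, f_d⟫ ν(f₂,f₃,f_c,f_d)`, in which only `{c,d} = {0,1}` survives; these two
terms agree by skew-adjointness and add up to `4 ⟪A(f₀,f₁)f₁, f₀⟫ ν(f)`
(`trace_comp_orthonormalBasis`). The sign of `σ` cancels against `ν(e ∘ σ) = sgn(σ) ν(e)`, and each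
ordered pair `(σ 0, σ 1)` of distinct indices is hit by exactly two permutations
(`sum_perm_fin_four`), so the sum over `σ` is `8 κ_A ν(e)`.
-/

theorem sum_perm_fin_four (K : Fin 4 → Fin 4 → ℝ) (hK : ∀ a, K a a = 0) :
    ∑ σ : Equiv.Perm (Fin 4), K (σ 0) (σ 1) = 2 * ∑ a, ∑ b, K a b := by
  have hcard : ∀ p : Fin 4 × Fin 4,
      (Finset.univ.filter fun σ : Equiv.Perm (Fin 4) => (σ 0, σ 1) = p).card
        = if p.1 = p.2 then 0 else 2 := by decide
  rw [← Finset.sum_fiberwise (s := Finset.univ)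
    (g := fun σ : Equiv.Perm (Fin 4) => (σ 0, σ 1)), ← Fintype.sum_prod_type', Finset.mul_sum]
  refine Finset.sum_congr rfl fun p _ => ?_
  have hconst : ∀ σ ∈ Finset.univ.filter (fun σ : Equiv.Perm (Fin 4) => (σ 0, σ 1) = p),
      K (σ 0) (σ 1) = K p.1 p.2 := by
    intro σ hσ
    rw [← (Finset.mem_filter.mp hσ).2]
  rw [Finset.sum_congr rfl hconst, Finset.sum_const, hcard]
  split_ifs with h
  · rw [h, hK]; simp
  · simp

section

variable {V : Type*} [NormedAddCommGroup V] [InnerProductSpace ℝ V]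

theorem trace_comp_orthonormalBasis (B : V →ₗ[ℝ] V) (hB : ∀ Z W : V, ⟪B Z, W⟫ = -⟪B W, Z⟫)
    (ν : AlternatingMap ℝ V ℝ (Fin 4)) (f : OrthonormalBasis (Fin 4) ℝ V) (C : V →ₗ[ℝ] V)
    (hC : ∀ Z W : V, ⟪C Z, W⟫ = 2 * ν ![f 2, f 3, Z, W]) :
    LinearMap.trace ℝ V (B ∘ₗ C) = 4 * ⟪B (f 1), f 0⟫ * ν f := by
  have hexp : ∀ c, ⟪f c, (B ∘ₗ C) (f c)⟫
      = -∑ d, ⟪B (f c), f d⟫ * (2 * ν ![f 2, f 3, f c, f d]) := by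
    intro c
    rw [real_inner_comm, LinearMap.comp_apply, hB, ← f.sum_inner_mul_inner]
    simp only [← hC, real_inner_comm]
  -- A family listing `f` through indices with a repetition is killed by `ν`.
  have hrep : ∀ i : Fin 4 → Fin 4, ¬ Function.Injective i → ν (f ∘ i) = 0 := by
    intro i hi
    exact ν.map_eq_zero_of_not_injective _ fun h => hi h.of_comp
  have hvec : ∀ c d : Fin 4, (![f 2, f 3, f c, f d] : Fin 4 → V) = f ∘ ![2, 3, c, d] := by
    intro c d
    ext j
    fin_cases j <;> rfl
  have hzero : ∀ c d : Fin 4, ¬ Function.Injective ![2, 3, c, d] →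
      ν ![f 2, f 3, f c, f d] = 0 := fun c d h => by rw [hvec, hrep _ h]
  -- `(2,3,0,1)` is an even permutation of `(0,1,2,3)`, and `(2,3,1,0)` an odd one.
  have h01 : ν ![f 2, f 3, f 0, f 1] = ν f := by
    have h := ν.map_perm f (Equiv.swap 0 2 * Equiv.swap 1 3)
    have hi : (![2, 3, 0, 1] : Fin 4 → Fin 4) = ⇑(Equiv.swap 0 2 * Equiv.swap 1 3 :
      Equiv.Perm (Fin 4)) := by decide
    have hs : Equiv.Perm.sign (Equiv.swap 0 2 * Equiv.swap 1 3 : Equiv.Perm (Fin 4)) = 1 := by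
      decide
    rw [hvec, hi, h, hs, one_smul]
  have h10 : ν ![f 2, f 3, f 1, f 0] = -ν f := by
    have h := ν.map_swap (f ∘ ![2, 3, 0, 1]) (show (2 : Fin 4) ≠ 3 by decide)
    have hi : (![2, 3, 1, 0] : Fin 4 → Fin 4) = ![2, 3, 0, 1] ∘ ⇑(Equiv.swap (2 : Fin 4) 3) := by
      decide
    rw [hvec, hi, ← Function.comp_assoc, h, ← hvec, h01]
  rw [LinearMap.trace_eq_sum_inner _ f]
  simp only [hexp, Fin.sum_univ_four, h01, h10, hzero 0 0 (by decide), hzero 0 2 (by decide),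
    hzero 0 3 (by decide), hzero 1 1 (by decide), hzero 1 2 (by decide), hzero 1 3 (by decide),
    hzero 2 0 (by decide), hzero 2 1 (by decide), hzero 2 2 (by decide), hzero 2 3 (by decide),
    hzero 3 0 (by decide), hzero 3 1 (by decide), hzero 3 2 (by decide), hzero 3 3 (by decide)]
  rw [hB (f 0) (f 1)]
  ring

/-- A map `ν_o` with `⟪ν_o(X,Y)Z, W⟫ = 2ν(X,Y,Z,W)` is bilinear in `(X, Y)`. -/
theorem exists_bilinear_nu_o (ν : AlternatingMap ℝ V ℝ (Fin 4)) (νo : V → V → V →ₗ[ℝ] V)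
    (hνo : ∀ X Y Z W : V, ⟪νo X Y Z, W⟫ = 2 * ν ![X, Y, Z, W]) :
    ∃ N : V →ₗ[ℝ] V →ₗ[ℝ] V →ₗ[ℝ] V, ∀ X Y, N X Y = νo X Y := by
  have u0 : ∀ X X' Y Z W : V, Function.update ![X, Y, Z, W] 0 X' = ![X', Y, Z, W] := by
    intros; ext j; fin_cases j <;> rfl
  have u1 : ∀ X Y Y' Z W : V, Function.update ![X, Y, Z, W] 1 Y' = ![X, Y', Z, W] := by
    intros; ext j; fin_cases j <;> rfl
  refine ⟨LinearMap.mk₂ ℝ νo ?_ ?_ ?_ ?_, fun X Y => rfl⟩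
  · intro X X' Y
    refine LinearMap.ext fun Z => ext_inner_right ℝ fun W => ?_
    have h := ν.map_update_add ![X, Y, Z, W] 0 X X'
    simp only [u0] at h
    simp only [LinearMap.add_apply, inner_add_left, hνo, h, mul_add]
  · intro r X Y
    refine LinearMap.ext fun Z => ext_inner_right ℝ fun W => ?_
    have h := ν.map_update_smul ![X, Y, Z, W] 0 r X
    simp only [u0] at h
    simp only [LinearMap.smul_apply, real_inner_smul_left, hνo, h, smul_eq_mul]
    ring
  · intro X Y Y'
    refine LinearMap.ext fun Z => ext_inner_right ℝ fun W => ?_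
    have h := ν.map_update_add ![X, Y, Z, W] 1 Y Y'
    simp only [u1] at h
    simp only [LinearMap.add_apply, inner_add_left, hνo, h, mul_add]
  · intro r X Y
    refine LinearMap.ext fun Z => ext_inner_right ℝ fun W => ?_
    have h := ν.map_update_smul ![X, Y, Z, W] 1 r Y
    simp only [u1] at h
    simp only [LinearMap.smul_apply, real_inner_smul_left, hνo, h, smul_eq_mul]
    ring

/-- The 4-linear form `(X₀,…,X₃) ↦ tr(A(X₀,X₁) ∘ N(X₂,X₃))`, whose alternatization is
`4 tr(A∧N)`. -/
noncomputable def traceCompForm (A N : V →ₗ[ℝ] V →ₗ[ℝ] V →ₗ[ℝ] V) :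
    MultilinearMap ℝ (fun _ : Fin 4 => V) ℝ :=
  MultilinearMap.mk' (fun X => LinearMap.trace ℝ V (A (X 0) (X 1) ∘ₗ N (X 2) (X 3)))
    (by
      intro X i x y
      fin_cases i <;> simp [LinearMap.add_comp, LinearMap.comp_add])
    (by
      intro X i r x
      fin_cases i <;> simp [LinearMap.smul_comp, LinearMap.comp_smul])

end

/-- pointwise form of `tr(R^{LC}·(dB)_o) = 2κ·dB` in dimension 4. For an
alternating bilinear `End(V)`-valued form `A` with each `A(X,Y)` skew-adjoint, and an
alternating 4-form `ν` with `ν_o` determined by `⟪ν_o(X,Y)Z, W⟫ = 2ν(X,Y,Z,W)`, the 4-form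
`tr(A∧ν_o)` equals `2·κ_A·ν`, where `κ_A = Σ_{a,b}⟪A(e_a,e_b)e_b, e_a⟫`. -/
theorem trace_wedge_A_nu_o_eq_two_kappa_nu
    (V : Type*) [NormedAddCommGroup V] [InnerProductSpace ℝ V]
    (hdim : Module.finrank ℝ V = 4)
    (A : V →ₗ[ℝ] V →ₗ[ℝ] V →ₗ[ℝ] V)
    (hAalt : ∀ X : V, A X X = 0)
    (hAskew : ∀ X Y Z W : V, ⟪A X Y Z, W⟫ = -⟪A X Y W, Z⟫)
    (ν : AlternatingMap ℝ V ℝ (Fin 4))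
    (νo : V → V → V →ₗ[ℝ] V)
    (hνo : ∀ X Y Z W : V, ⟪νo X Y Z, W⟫ = 2 * ν ![X, Y, Z, W])
    (e : OrthonormalBasis (Fin 4) ℝ V) :
    ∀ X : Fin 4 → V,
      (1 / 4 : ℝ) * ∑ σ : Equiv.Perm (Fin 4),
          ((Equiv.Perm.sign σ : ℤ) : ℝ) *
            LinearMap.trace ℝ V (A (X (σ 0)) (X (σ 1)) ∘ₗ νo (X (σ 2)) (X (σ 3))) =
        2 * (∑ a : Fin 4, ∑ b : Fin 4, ⟪A (e a) (e b) (e b), e a⟫) * ν X := by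
  classical
  obtain ⟨N, hN⟩ := exists_bilinear_nu_o ν νo hνo
  have halt : ∀ X : Fin 4 → V, ∑ σ : Equiv.Perm (Fin 4), ((Equiv.Perm.sign σ : ℤ) : ℝ) *
      LinearMap.trace ℝ V (A (X (σ 0)) (X (σ 1)) ∘ₗ νo (X (σ 2)) (X (σ 3)))
        = MultilinearMap.alternatization (traceCompForm A N) X := by
    intro X
    rw [MultilinearMap.alternatization_apply]
    refine Finset.sum_congr rfl fun σ _ => ?_
    rw [Units.smul_def, zsmul_eq_mul]
    simp [traceCompForm, hN]
  have hbasis : MultilinearMap.alternatization (traceCompForm A N) e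
      = 8 * (∑ a : Fin 4, ∑ b : Fin 4, ⟪A (e a) (e b) (e b), e a⟫) * ν e := by
    have hterm : ∀ σ : Equiv.Perm (Fin 4), ((Equiv.Perm.sign σ : ℤ) : ℝ) *
        LinearMap.trace ℝ V (A (e (σ 0)) (e (σ 1)) ∘ₗ νo (e (σ 2)) (e (σ 3)))
          = ⟪A (e (σ 0)) (e (σ 1)) (e (σ 1)), e (σ 0)⟫ * (4 * ν e) := by
      intro σ
      have h := trace_comp_orthonormalBasis (A (e (σ 0)) (e (σ 1))) (hAskew _ _) ν
        (e.reindex σ.symm) (νo (e (σ 2)) (e (σ 3))) (fun Z W => by simp [hνo])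
      have hsq : ((Equiv.Perm.sign σ : ℤ) : ℝ) * ((Equiv.Perm.sign σ : ℤ) : ℝ) = 1 := by
        rw [← Int.cast_mul, ← Units.val_mul, Int.units_mul_self]; simp
      have hperm := ν.map_perm e σ
      rw [Units.smul_def, zsmul_eq_mul] at hperm
      simp only [OrthonormalBasis.coe_reindex, Equiv.symm_symm, Function.comp_apply] at h
      rw [h, hperm]
      linear_combination (4 * ⟪A (e (σ 0)) (e (σ 1)) (e (σ 1)), e (σ 0)⟫ * ν e) * hsq
    rw [← halt, Finset.sum_congr rfl fun σ _ => hterm σ, ← Finset.sum_mul,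
      sum_perm_fin_four (fun a b => ⟪A (e a) (e b) (e b), e a⟫) (fun a => by simp [hAalt])]
    ring
  intro X
  have hL := congrArg (fun g => g X)
    ((MultilinearMap.alternatization (traceCompForm A N)).eq_smul_basis_det e.toBasis)
  have hR := congrArg (fun g => g X) (ν.eq_smul_basis_det e.toBasis)
  simp only [AlternatingMap.smul_apply, smul_eq_mul, OrthonormalBasis.coe_toBasis] at hL hR
  rw [halt, hL, hR, hbasis]
  ring
end

section
/- Let (V, ⟨·,·⟩) be a 4-dimensional real inner product space and let ν be an alternating 4-linear form on V. Let ν_o be determined by ⟨ν_o(X,Y)Z, W⟩ = 2·ν(X,Y,Z,W). Then the 4-form tr(ν_o∧ν_o), defined on vectors X₁,…,X₄ by (1/4)·Σ_{σ∈S₄} sgn(σ)·tr( ν_o(X_{σ(1)},X_{σ(2)}) ∘ ν_o(X_{σ(3)},X_{σ(4)}) ), is identically zero. -/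
/-!
Write `T(X) = tr (ν_o(X₀,X₁) ∘ ν_o(X₂,X₃))`. Since the inner product is nondegenerate, `ν_o` is
bilinear, so `T` is multilinear and the sum over permutations is its alternatization; it is therefore
enough to evaluate it on tuples of distinct vectors of an orthonormal basis
(`Module.Basis.ext_alternating`). There every summand vanishes: if `a, b, c, d` is an orthonormal basis,
then `ν_o(c,d)` takes values in the orthogonal complement of `c, d`, i.e. the span of `a, b`, and
`ν_o(a,b)` kills `a` and `b`, so already `ν_o(a,b) ∘ ν_o(c,d) = 0` (`nuO_comp_eq_zero`).
-/

open RealInnerProductSpace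

section Helpers

variable {V : Type*} [NormedAddCommGroup V] [InnerProductSpace ℝ V]
  {ν : AlternatingMap ℝ V ℝ (Fin 4)} {νo : V → V → V →ₗ[ℝ] V}

lemma nuO_add_left (hνo : ∀ X Y Z W : V, ⟪νo X Y Z, W⟫ = 2 * ν ![X, Y, Z, W]) (a a' b : V) :
    νo (a + a') b = νo a b + νo a' b := by
  ext z
  refine ext_inner_right ℝ fun w => ?_
  rw [LinearMap.add_apply, inner_add_left, hνo, hνo, hνo, ν.map_vecCons_add, mul_add]

lemma nuO_smul_left (hνo : ∀ X Y Z W : V, ⟪νo X Y Z, W⟫ = 2 * ν ![X, Y, Z, W]) (c : ℝ) (a b : V) :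
    νo (c • a) b = c • νo a b := by
  ext z
  refine ext_inner_right ℝ fun w => ?_
  rw [LinearMap.smul_apply, real_inner_smul_left, hνo, hνo, ν.map_vecCons_smul, smul_eq_mul]
  ring

lemma nuO_swap (hνo : ∀ X Y Z W : V, ⟪νo X Y Z, W⟫ = 2 * ν ![X, Y, Z, W]) (a b : V) :
    νo a b = -νo b a := by
  ext z
  refine ext_inner_right ℝ fun w => ?_
  have h := ν.map_swap ![b, a, z, w] (i := 0) (j := 1) (by decide)
  have h' : ![b, a, z, w] ∘ Equiv.swap (0 : Fin 4) 1 = ![a, b, z, w] := by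
    ext i
    fin_cases i <;> rfl
  rw [h'] at h
  rw [LinearMap.neg_apply, inner_neg_left, hνo, hνo, h]
  ring

lemma nuO_add_right (hνo : ∀ X Y Z W : V, ⟪νo X Y Z, W⟫ = 2 * ν ![X, Y, Z, W]) (a b b' : V) :
    νo a (b + b') = νo a b + νo a b' := by
  rw [nuO_swap hνo, nuO_add_left hνo, nuO_swap hνo a b, nuO_swap hνo a b', neg_add]

lemma nuO_smul_right (hνo : ∀ X Y Z W : V, ⟪νo X Y Z, W⟫ = 2 * ν ![X, Y, Z, W]) (c : ℝ)
    (a b : V) : νo a (c • b) = c • νo a b := by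
  rw [nuO_swap hνo, nuO_smul_left hνo, nuO_swap hνo a b, smul_neg]

/-- The multilinear form `X ↦ tr (ν_o(X₀,X₁) ∘ ν_o(X₂,X₃))`, whose alternatization is
`4 tr(ν_o ∧ ν_o)`. -/
noncomputable def traceForm (hνo : ∀ X Y Z W : V, ⟪νo X Y Z, W⟫ = 2 * ν ![X, Y, Z, W]) :
    MultilinearMap ℝ (fun _ : Fin 4 => V) ℝ :=
  MultilinearMap.mk' (fun X => LinearMap.trace ℝ V (νo (X 0) (X 1) ∘ₗ νo (X 2) (X 3)))
    (by
      intro m i x y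
      fin_cases i <;>
        simp [Function.update, nuO_add_left hνo, nuO_add_right hνo, LinearMap.add_comp,
          LinearMap.comp_add])
    (by
      intro m i c x
      fin_cases i <;>
        simp [Function.update, nuO_smul_left hνo, nuO_smul_right hνo, LinearMap.smul_comp,
          LinearMap.comp_smul])

lemma nuO_comp_eq_zero (hνo : ∀ X Y Z W : V, ⟪νo X Y Z, W⟫ = 2 * ν ![X, Y, Z, W])
    (e : OrthonormalBasis (Fin 4) ℝ V) (p : Fin 4 → Fin 4) (hp : Function.Injective p) :
    νo (e (p 0)) (e (p 1)) ∘ₗ νo (e (p 2)) (e (p 3)) = 0 := by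
  ext x
  rw [LinearMap.comp_apply, ← e.sum_repr (νo (e (p 2)) (e (p 3)) x), map_sum]
  refine Finset.sum_eq_zero fun l _ => ?_
  rw [map_smul, e.repr_apply_apply, real_inner_comm, hνo]
  obtain ⟨k, rfl⟩ := (Finite.injective_iff_surjective.mp hp) l
  -- For `k = 0, 1` the vector is killed by the outer factor.
  have hker : ∀ i : Fin 4, i = 0 ∨ i = 1 → νo (e (p 0)) (e (p 1)) (e (p i)) = 0 := by
    intro i hi
    refine ext_inner_right ℝ fun w => ?_
    rw [hνo, inner_zero_left]
    rcases hi with rfl | rfl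
    · rw [ν.map_eq_zero_of_eq _ (i := 0) (j := 2) rfl (by decide), mul_zero]
    · rw [ν.map_eq_zero_of_eq _ (i := 1) (j := 2) rfl (by decide), mul_zero]
  -- For `k = 2, 3` the coefficient contains a repeated argument of `ν`.
  fin_cases k
  · rw [hker _ (by simp), smul_zero]
  · rw [hker _ (by simp), smul_zero]
  · rw [ν.map_eq_zero_of_eq _ (i := 0) (j := 3) rfl (by decide), mul_zero, zero_smul]
  · rw [ν.map_eq_zero_of_eq _ (i := 1) (j := 3) rfl (by decide), mul_zero, zero_smul]

end Helpers

/-- `tr((dB)_o²) = 0` in dimension 4: for an alternating 4-form `ν` on a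
4-dimensional real inner product space, with `ν_o` determined by
`⟪ν_o(X,Y)Z, W⟫ = 2ν(X,Y,Z,W)`, the 4-form `tr(ν_o∧ν_o)` vanishes identically. -/
theorem trace_wedge_nu_o_nu_o_eq_zero
    (V : Type*) [NormedAddCommGroup V] [InnerProductSpace ℝ V]
    (hdim : Module.finrank ℝ V = 4)
    (ν : AlternatingMap ℝ V ℝ (Fin 4))
    (νo : V → V → V →ₗ[ℝ] V)
    (hνo : ∀ X Y Z W : V, ⟪νo X Y Z, W⟫ = 2 * ν ![X, Y, Z, W]) :
    ∀ X : Fin 4 → V,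
      (1 / 4 : ℝ) * ∑ σ : Equiv.Perm (Fin 4),
          ((Equiv.Perm.sign σ : ℤ) : ℝ) *
            LinearMap.trace ℝ V (νo (X (σ 0)) (X (σ 1)) ∘ₗ νo (X (σ 2)) (X (σ 3))) = 0 := by
  intro X
  have : FiniteDimensional ℝ V := Module.finite_of_finrank_pos (by omega)
  let e : OrthonormalBasis (Fin 4) ℝ V := (stdOrthonormalBasis ℝ V).reindex (finCongr hdim)
  have hzero : MultilinearMap.alternatization (traceForm hνo) = 0 := by
    refine Module.Basis.ext_alternating e.toBasis fun v hv => ?_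
    rw [MultilinearMap.alternatization_apply, AlternatingMap.zero_apply]
    refine Finset.sum_eq_zero fun σ _ => ?_
    have h := nuO_comp_eq_zero hνo e (fun i => v (σ i)) (hv.comp σ.injective)
    simp [traceForm, h]
  have hX := congrArg (fun f => f X) hzero
  simp only [MultilinearMap.alternatization_apply, AlternatingMap.zero_apply] at hX
  rw [mul_eq_zero]
  right
  rw [← hX]
  refine Finset.sum_congr rfl fun σ _ => ?_
  simp [traceForm, Units.smul_def]
end

section
/- Let (V, ⟨·,·⟩) be a 4-dimensional real inner product space, let C be a linear map assigning to each W ∈ V an alternating trilinear form C_W on V, and define the End(V)-valued alternating 2-form D by D(W,X) = (C_W)_o(X) − (C_X)_o(W), where ⟨(C_W)_o(X)Y, Z⟩ = 2·C_W(X,Y,Z). Then for every alternating 4-linear form ν on V, with ν_o determined by ⟨ν_o(X,Y)Z, W⟩ = 2·ν(X,Y,Z,W), the 4-form tr(D∧ν_o), defined on vectors X₁,…,X₄ by (1/4)·Σ_{σ∈S₄} sgn(σ)·tr( D(X_{σ(1)},X_{σ(2)}) ∘ ν_o(X_{σ(3)},X_{σ(4)}) ), is identically zero. -/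
/-!
The expression `tr(D ∧ ν_o)` is, up to the factor `1/4`, the alternatization of the multilinear map
`X ↦ tr(D(X₀, X₁) ∘ ν_o(X₂, X₃))`, so it suffices to evaluate it on injective families of vectors of
an orthonormal basis (`Module.Basis.ext_alternating`). There every summand already vanishes
(`trace_eq_zero_of_orthonormalBasis`): for an orthonormal basis `b` the trace of
`D(b₀, b₁) ∘ ν_o(b₂, b₃)` is, by skewness of `D(b₀, b₁)`, minus the sum over `i, j` of
`⟪ν_o(b₂, b₃) bᵢ, bⱼ⟫ * ⟪D(b₀, b₁) bᵢ, bⱼ⟫`. The first factor is zero unless `{i, j} = {0, 1}`, and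
in that case the second one is zero, as it only involves `C_{b₀}` and `C_{b₁}` evaluated on
three vectors from `{b₀, b₁}`.
-/

open RealInnerProductSpace

section Helpers

lemma update_vec_three {V : Type*} (a b c v : V) :
    Function.update ![a, b, c] 0 v = ![v, b, c] := by
  funext i; fin_cases i <;> rfl

lemma update_vec_four_zero {V : Type*} (a b c d v : V) :
    Function.update ![a, b, c, d] 0 v = ![v, b, c, d] := by
  funext i; fin_cases i <;> rfl

lemma update_vec_four_one {V : Type*} (a b c d v : V) :
    Function.update ![a, b, c, d] 1 v = ![a, v, c, d] := by
  funext i; fin_cases i <;> rfl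

variable {V : Type*} [NormedAddCommGroup V] [InnerProductSpace ℝ V]

/-- An alternating trilinear form vanishes on triples with a repeated entry; listed by position. -/
lemma alternating_three_repeat (c : AlternatingMap ℝ V ℝ (Fin 3)) (x y : V) :
    c ![x, x, y] = 0 ∧ c ![x, y, x] = 0 ∧ c ![y, x, x] = 0 :=
  ⟨c.map_eq_zero_of_eq _ (i := 0) (j := 1) rfl (by decide),
    c.map_eq_zero_of_eq _ (i := 0) (j := 2) rfl (by decide),
    c.map_eq_zero_of_eq _ (i := 1) (j := 2) rfl (by decide)⟩

lemma trace_eq_zero_of_orthonormalBasis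
    (C : V →ₗ[ℝ] AlternatingMap ℝ V ℝ (Fin 3))
    (Co : V → V → V →ₗ[ℝ] V)
    (hCo : ∀ W X Y Z : V, ⟪Co W X Y, Z⟫ = 2 * C W ![X, Y, Z])
    (ν : AlternatingMap ℝ V ℝ (Fin 4))
    (νo : V → V → V →ₗ[ℝ] V)
    (hνo : ∀ X Y Z W : V, ⟪νo X Y Z, W⟫ = 2 * ν ![X, Y, Z, W])
    (b : OrthonormalBasis (Fin 4) ℝ V) :
    LinearMap.trace ℝ V ((Co (b 0) (b 1) - Co (b 1) (b 0)) ∘ₗ νo (b 2) (b 3)) = 0 := by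
  have hskew : ∀ W X Y Z : V, ⟪Co W X Y, Z⟫ = -⟪Co W X Z, Y⟫ := by
    intro W X Y Z
    have h := (C W).map_swap ![X, Y, Z] (i := 1) (j := 2) (by decide)
    have e : ![X, Y, Z] ∘ Equiv.swap (1 : Fin 3) 2 = ![X, Z, Y] := by
      funext i; fin_cases i <;> rfl
    rw [e] at h
    rw [hCo, hCo, h]; ring
  rw [LinearMap.trace_eq_sum_inner _ b]
  refine Finset.sum_eq_zero fun i _ => ?_
  have hi : ⟪b i, ((Co (b 0) (b 1) - Co (b 1) (b 0)) ∘ₗ νo (b 2) (b 3)) (b i)⟫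
      = -⟪(Co (b 0) (b 1) - Co (b 1) (b 0)) (b i), νo (b 2) (b 3) (b i)⟫ := by
    rw [real_inner_comm, LinearMap.comp_apply, LinearMap.sub_apply, LinearMap.sub_apply,
      inner_sub_left, inner_sub_left, hskew, hskew (b 1)]
    ring
  rw [hi, ← b.sum_inner_mul_inner, neg_eq_zero]
  refine Finset.sum_eq_zero fun j _ => ?_
  rw [real_inner_comm (νo _ _ _), hνo, LinearMap.sub_apply, inner_sub_left, hCo, hCo]
  -- A repeated vector among `b 2, b 3, b i, b j` kills `ν`; otherwise `i, j ∈ {0, 1}`.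
  by_cases hinj : Function.Injective ![2, 3, i, j]
  · have key : ∀ i j : Fin 4, Function.Injective ![2, 3, i, j] →
        (i = 0 ∧ j = 1) ∨ (i = 1 ∧ j = 0) := by decide
    rcases key i j hinj with ⟨rfl, rfl⟩ | ⟨rfl, rfl⟩ <;> simp [alternating_three_repeat]
  · have e : ![b 2, b 3, b i, b j] = b ∘ ![2, 3, i, j] := by
      funext k; fin_cases k <;> rfl
    rw [e, ν.map_eq_zero_of_not_injective _ fun h => hinj h.of_comp]
    ring

/-- The map `X ↦ tr(D(X₀, X₁) ∘ ν_o(X₂, X₃))`, whose multilinearity comes from the additivity and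
homogeneity of `Co` and `νo` in their first two arguments. -/
noncomputable def traceMultilinear (Co νo : V → V → V →ₗ[ℝ] V)
    (C₁ : ∀ x x' y, Co (x + x') y = Co x y + Co x' y)
    (C₂ : ∀ x y y', Co x (y + y') = Co x y + Co x y')
    (C₃ : ∀ (r : ℝ) x y, Co (r • x) y = r • Co x y)
    (C₄ : ∀ (r : ℝ) x y, Co x (r • y) = r • Co x y)
    (N₁ : ∀ x x' y, νo (x + x') y = νo x y + νo x' y)
    (N₂ : ∀ x y y', νo x (y + y') = νo x y + νo x y')
    (N₃ : ∀ (r : ℝ) x y, νo (r • x) y = r • νo x y)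
    (N₄ : ∀ (r : ℝ) x y, νo x (r • y) = r • νo x y) :
    MultilinearMap ℝ (fun _ : Fin 4 => V) ℝ :=
  MultilinearMap.mk'
    (fun X => LinearMap.trace ℝ V ((Co (X 0) (X 1) - Co (X 1) (X 0)) ∘ₗ νo (X 2) (X 3)))
    (by
      intro m i x y
      rw [← map_add]
      congr 1
      fin_cases i <;> ext v <;> simp [C₁, C₂, N₁, N₂] <;> abel)
    (by
      intro m i r x
      rw [← map_smul]
      congr 1
      fin_cases i <;> ext v <;> simp [C₃, C₄, N₃, N₄, smul_sub])

end Helpers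

/-- pointwise form of `tr((d_{∇^{LC}}B_o)·(dB)_o) = 0` in dimension 4. With
`C` a linear map assigning to each `W` an alternating trilinear form `C_W`,
`D(W,X) = (C_W)_o(X) − (C_X)_o(W)`, and `ν_o` built from an alternating 4-form `ν`,
the 4-form `tr(D∧ν_o)` vanishes identically. -/
theorem trace_wedge_D_nu_o_eq_zero
    (V : Type*) [NormedAddCommGroup V] [InnerProductSpace ℝ V]
    (hdim : Module.finrank ℝ V = 4)
    (C : V →ₗ[ℝ] AlternatingMap ℝ V ℝ (Fin 3))
    (Co : V → V → V →ₗ[ℝ] V)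
    (hCo : ∀ W X Y Z : V, ⟪Co W X Y, Z⟫ = 2 * C W ![X, Y, Z])
    (ν : AlternatingMap ℝ V ℝ (Fin 4))
    (νo : V → V → V →ₗ[ℝ] V)
    (hνo : ∀ X Y Z W : V, ⟪νo X Y Z, W⟫ = 2 * ν ![X, Y, Z, W]) :
    ∀ X : Fin 4 → V,
      (1 / 4 : ℝ) * ∑ σ : Equiv.Perm (Fin 4),
          ((Equiv.Perm.sign σ : ℤ) : ℝ) *
            LinearMap.trace ℝ V
              ((Co (X (σ 0)) (X (σ 1)) - Co (X (σ 1)) (X (σ 0))) ∘ₗ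
                νo (X (σ 2)) (X (σ 3))) = 0 := by
  intro X
  have : FiniteDimensional ℝ V := Module.finite_of_finrank_eq_succ hdim
  let b : OrthonormalBasis (Fin 4) ℝ V := (stdOrthonormalBasis ℝ V).reindex (finCongr hdim)
  have C₁ : ∀ x x' y, Co (x + x') y = Co x y + Co x' y := fun x x' y =>
    LinearMap.ext fun z => ext_inner_right ℝ fun w => by
      simp only [LinearMap.add_apply, inner_add_left, hCo, map_add, AlternatingMap.add_apply]
      ring
  have C₂ : ∀ x y y', Co x (y + y') = Co x y + Co x y' := fun x y y' =>
    LinearMap.ext fun z => ext_inner_right ℝ fun w => by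
      have := (C x).map_update_add ![y, z, w] 0 y y'
      simp only [update_vec_three] at this
      simp only [LinearMap.add_apply, inner_add_left, hCo]
      linarith
  have C₃ : ∀ (r : ℝ) x y, Co (r • x) y = r • Co x y := fun r x y =>
    LinearMap.ext fun z => ext_inner_right ℝ fun w => by
      simp only [LinearMap.smul_apply, real_inner_smul_left, hCo, map_smul,
        AlternatingMap.smul_apply, smul_eq_mul]
      ring
  have C₄ : ∀ (r : ℝ) x y, Co x (r • y) = r • Co x y := fun r x y =>
    LinearMap.ext fun z => ext_inner_right ℝ fun w => by
      have := (C x).map_update_smul ![y, z, w] 0 r y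
      simp only [update_vec_three, smul_eq_mul] at this
      simp only [LinearMap.smul_apply, real_inner_smul_left, hCo, this]
      ring
  have N₁ : ∀ x x' y, νo (x + x') y = νo x y + νo x' y := fun x x' y =>
    LinearMap.ext fun z => ext_inner_right ℝ fun w => by
      have := ν.map_update_add ![x, y, z, w] 0 x x'
      simp only [update_vec_four_zero] at this
      simp only [LinearMap.add_apply, inner_add_left, hνo]
      linarith
  have N₂ : ∀ x y y', νo x (y + y') = νo x y + νo x y' := fun x y y' =>
    LinearMap.ext fun z => ext_inner_right ℝ fun w => by
      have := ν.map_update_add ![x, y, z, w] 1 y y'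
      simp only [update_vec_four_one] at this
      simp only [LinearMap.add_apply, inner_add_left, hνo]
      linarith
  have N₃ : ∀ (r : ℝ) x y, νo (r • x) y = r • νo x y := fun r x y =>
    LinearMap.ext fun z => ext_inner_right ℝ fun w => by
      have := ν.map_update_smul ![x, y, z, w] 0 r x
      simp only [update_vec_four_zero, smul_eq_mul] at this
      simp only [LinearMap.smul_apply, real_inner_smul_left, hνo, this]
      ring
  have N₄ : ∀ (r : ℝ) x y, νo x (r • y) = r • νo x y := fun r x y =>
    LinearMap.ext fun z => ext_inner_right ℝ fun w => by
      have := ν.map_update_smul ![x, y, z, w] 1 r y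
      simp only [update_vec_four_one, smul_eq_mul] at this
      simp only [LinearMap.smul_apply, real_inner_smul_left, hνo, this]
      ring
  let m := traceMultilinear Co νo C₁ C₂ C₃ C₄ N₁ N₂ N₃ N₄
  have hm : ∀ v : Fin 4 → V, m v =
      LinearMap.trace ℝ V ((Co (v 0) (v 1) - Co (v 1) (v 0)) ∘ₗ νo (v 2) (v 3)) := fun _ => rfl
  have halt : MultilinearMap.alternatization m = 0 := by
    refine Module.Basis.ext_alternating b.toBasis fun f hf => ?_
    rw [MultilinearMap.alternatization_apply, AlternatingMap.zero_apply]
    refine Finset.sum_eq_zero fun σ _ => ?_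
    -- `f ∘ σ` is a permutation of the indices, so the evaluation point is again an orthonormal
    -- basis, namely `b` reindexed.
    let g : Equiv.Perm (Fin 4) :=
      Equiv.ofBijective (f ∘ σ) (Finite.injective_iff_bijective.1 (hf.comp σ.injective))
    have h := trace_eq_zero_of_orthonormalBasis C Co hCo ν νo hνo (b.reindex g.symm)
    rw [MultilinearMap.domDomCongr_apply, hm]
    simp only [OrthonormalBasis.reindex_apply, Equiv.symm_symm, g, Equiv.ofBijective_apply,
      Function.comp_apply] at h
    simp only [OrthonormalBasis.coe_toBasis]
    rw [h, smul_zero]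
  have hX := congrArg (fun a => a X) halt
  simp only [MultilinearMap.alternatization_apply, MultilinearMap.domDomCongr_apply, hm,
    AlternatingMap.zero_apply, Units.smul_def, zsmul_eq_mul] at hX
  rw [hX, mul_zero]
end

section
/- Let (V, ⟨·,·⟩) be a 4-dimensional real inner product space, B an alternating trilinear form on V, and ν an alternating 4-linear form on V. Let B_o : V → End(V) be determined by ⟨B_o(X)Y, Z⟩ = 2·B(X,Y,Z), let B_o²(X,Y) := B_o(X)∘B_o(Y) − B_o(Y)∘B_o(X), and let ν_o be determined by ⟨ν_o(X,Y)Z, W⟩ = 2·ν(X,Y,Z,W). Then the 4-form tr(B_o²∧ν_o), defined on vectors X₁,…,X₄ by (1/4)·Σ_{σ∈S₄} sgn(σ)·tr( B_o²(X_{σ(1)},X_{σ(2)}) ∘ ν_o(X_{σ(3)},X_{σ(4)}) ), equals −48·|B|²·ν, where |B|² = Σ_{i<j<k} B(e_i,e_j,e_k)² for any orthonormal basis e₁,…,e₄ of V. -/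
/-!
Both sides are alternating in the four vectors, the left one being the alternatization of the
tensor `traceTensor`. The space of alternating `4`-forms on a `4`-dimensional space is a line, so
it suffices to compare the two sides on the orthonormal basis `e`.

There `ν(e_i, e_j, e_k, e_l)` is the Levi-Civita symbol times `ν(e)`, and `B(e_i, e_j, e_k)` is a
signed Levi-Civita contraction of the four numbers `b_p`, the values of `B` on the basis with `e_p`
omitted. The left-hand side becomes a quadratic form in `b` with integer coefficients, and
`contraction_eq` and `contraction_swap_eq` evaluate these coefficients: the form is a multiple of
`∑ b_p ^ 2 = |B|²`.
-/

open RealInnerProductSpace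

/-- The Levi-Civita symbol on four indices, written as a Vandermonde product; the division by
`12 = (1-0)(2-0)(3-0)(2-1)(3-1)(3-2)` is exact. -/
def leviCivita (i j k l : Fin 4) : ℤ :=
  ((j : ℤ) - i) * ((k : ℤ) - i) * ((l : ℤ) - i) * ((k : ℤ) - j) * ((l : ℤ) - j) *
    ((l : ℤ) - k) / 12

/-- Coefficients expressing `B(e_i, e_j, e_k)` through the four independent components
`b_p = B(e_0, .., ê_p, .., e_3)`: up to sign this is the Hodge dual of the basis covector `p`. -/
def hodgeCoeff (p i j k : Fin 4) : ℤ := (-1) ^ (p : ℕ) * leviCivita p i j k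

theorem leviCivita_perm (σ : Equiv.Perm (Fin 4)) :
    leviCivita (σ 0) (σ 1) (σ 2) (σ 3) = Equiv.Perm.sign σ := by
  revert σ
  decide +kernel

theorem leviCivita_eq_zero (f : Fin 4 → Fin 4) (hf : ¬ Function.Injective f) :
    leviCivita (f 0) (f 1) (f 2) (f 3) = 0 := by
  revert f
  decide +kernel

theorem hodgeCoeff_eq_zero (f : Fin 3 → Fin 4) (hf : ¬ Function.Injective f) (p : Fin 4) :
    hodgeCoeff p (f 0) (f 1) (f 2) = 0 := by
  revert f p
  decide +kernel

theorem hodgeCoeff_injective (f : Fin 3 → Fin 4) (hf : Function.Injective f) :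
    ∃ (p : Fin 4) (σ : Equiv.Perm (Fin 3)), f = p.succAbove ∘ σ ∧
      ∀ q, hodgeCoeff q (f 0) (f 1) (f 2) = if q = p then (Equiv.Perm.sign σ : ℤ) else 0 := by
  revert f
  decide +kernel

/-- The finite combinatorial identity behind the constant: contracting the two Hodge duals with
the Levi-Civita symbol gives a multiple of the identity. -/
theorem contraction_eq (p q : Fin 4) :
    ∑ σ : Equiv.Perm (Fin 4), ∑ a : Fin 4, ∑ b : Fin 4, ∑ c : Fin 4,
      hodgeCoeff p (σ 0) b a * hodgeCoeff q (σ 1) c b *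
        (Equiv.Perm.sign σ * leviCivita (σ 2) (σ 3) a c) = if p = q then -12 else 0 := by
  revert p q
  decide +kernel

theorem contraction_swap_eq (p q : Fin 4) :
    ∑ σ : Equiv.Perm (Fin 4), ∑ a : Fin 4, ∑ b : Fin 4, ∑ c : Fin 4,
      hodgeCoeff p (σ 1) b a * hodgeCoeff q (σ 0) c b *
        (Equiv.Perm.sign σ * leviCivita (σ 2) (σ 3) a c) = if p = q then 12 else 0 := by
  revert p q
  decide +kernel

theorem sum_quadratic {ι : Type*} [Fintype ι] (u w : Fin 4 → ι → ℤ) (t : ι → ℤ)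
    (β : Fin 4 → ℝ) (m : ℤ)
    (h : ∀ p q, ∑ x, u p x * w q x * t x = if p = q then m else 0) :
    ∑ x, (∑ p, (u p x : ℝ) * β p) * (∑ q, (w q x : ℝ) * β q) * (t x : ℝ) =
      m * ∑ p, β p ^ 2 := by
  have h' : ∀ p q, ∑ x, (u p x : ℝ) * w q x * t x = if p = q then (m : ℝ) else 0 := by
    intro p q
    have := congrArg (Int.cast : ℤ → ℝ) (h p q)
    push_cast at this
    exact this
  calc _ = ∑ x, ∑ p, ∑ q, β p * β q * ((u p x : ℝ) * w q x * t x) := by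
        refine Finset.sum_congr rfl fun x _ => ?_
        rw [Finset.sum_mul_sum, Finset.sum_mul]
        refine Finset.sum_congr rfl fun p _ => ?_
        rw [Finset.sum_mul]
        exact Finset.sum_congr rfl fun q _ => by ring
    _ = ∑ p, ∑ q, β p * β q * ∑ x, ((u p x : ℝ) * w q x * t x) := by
        rw [Finset.sum_comm]
        refine Finset.sum_congr rfl fun p _ => ?_
        rw [Finset.sum_comm]
        exact Finset.sum_congr rfl fun q _ => by rw [Finset.mul_sum]
    _ = _ := by
        simp only [h', mul_ite, mul_zero, Finset.sum_ite_eq, Finset.mem_univ, if_true,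
          Finset.mul_sum]
        exact Finset.sum_congr rfl fun p _ => by ring

section

variable {V : Type*} [NormedAddCommGroup V] [InnerProductSpace ℝ V]

theorem four_form_apply_basis (ν : AlternatingMap ℝ V ℝ (Fin 4)) (e : Fin 4 → V)
    (i j k l : Fin 4) :
    ν ![e i, e j, e k, e l] = leviCivita i j k l * ν e := by
  have hc : ![e i, e j, e k, e l] = e ∘ ![i, j, k, l] := by
    ext x; fin_cases x <;> rfl
  rw [hc]
  by_cases hf : Function.Injective ![i, j, k, l]
  · let σ : Equiv.Perm (Fin 4) := Equiv.ofBijective _ (Finite.injective_iff_bijective.mp hf)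
    have h1 := leviCivita_perm σ
    have h2 : ν (e ∘ ![i, j, k, l]) = Equiv.Perm.sign σ • ν e := ν.map_perm e σ
    change leviCivita i j k l = _ at h1
    rw [h1, h2, Units.smul_def, zsmul_eq_mul]
  · have h1 := leviCivita_eq_zero _ hf
    change leviCivita i j k l = 0 at h1
    rw [h1, ν.map_eq_zero_of_not_injective _ fun h => hf h.of_comp]
    simp

theorem three_form_apply_basis (B : AlternatingMap ℝ V ℝ (Fin 3)) (e : Fin 4 → V)
    (i j k : Fin 4) :
    B ![e i, e j, e k] = ∑ p, (hodgeCoeff p i j k : ℝ) * B (e ∘ p.succAbove) := by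
  have hc : ![e i, e j, e k] = e ∘ ![i, j, k] := by
    ext x; fin_cases x <;> rfl
  rw [hc]
  by_cases hf : Function.Injective ![i, j, k]
  · obtain ⟨p, σ, hσ, h1⟩ := hodgeCoeff_injective _ hf
    change ∀ q, hodgeCoeff q i j k = _ at h1
    rw [hσ, ← Function.comp_assoc]
    have h2 : B ((e ∘ p.succAbove) ∘ σ) = Equiv.Perm.sign σ • B (e ∘ p.succAbove) :=
      B.map_perm _ σ
    rw [h2, Units.smul_def, zsmul_eq_mul]
    simp [h1]
  · have h1 := hodgeCoeff_eq_zero _ hf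
    change ∀ p, hodgeCoeff p i j k = 0 at h1
    rw [B.map_eq_zero_of_not_injective _ fun h => hf h.of_comp]
    simp [h1]

theorem trace_comp_comp (e : OrthonormalBasis (Fin 4) ℝ V) (F G H : V →ₗ[ℝ] V) :
    LinearMap.trace ℝ V ((F ∘ₗ G) ∘ₗ H) =
      ∑ a, ∑ b, ∑ c, ⟪F (e b), e a⟫ * ⟪G (e c), e b⟫ * ⟪H (e a), e c⟫ := by
  rw [LinearMap.trace_eq_matrix_trace ℝ e.toBasis, LinearMap.toMatrix_comp e.toBasis e.toBasis,
    LinearMap.toMatrix_comp e.toBasis e.toBasis, Matrix.mul_assoc]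
  simp only [Matrix.trace, Matrix.diag_apply, Matrix.mul_apply, LinearMap.toMatrix_apply,
    OrthonormalBasis.coe_toBasis, OrthonormalBasis.coe_toBasis_repr_apply,
    OrthonormalBasis.repr_apply_apply, Finset.mul_sum, mul_assoc]
  simp only [real_inner_comm]

/-- The `4`-tensor whose alternatization is the left-hand side of the identity. -/
noncomputable def traceTensor (L : V →ₗ[ℝ] V →ₗ[ℝ] V) (N : V →ₗ[ℝ] V →ₗ[ℝ] V →ₗ[ℝ] V) :
    MultilinearMap ℝ (fun _ : Fin 4 => V) ℝ :=
  MultilinearMap.mk'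
    (fun X => LinearMap.trace ℝ V
      ((L (X 0) ∘ₗ L (X 1) - L (X 1) ∘ₗ L (X 0)) ∘ₗ N (X 2) (X 3)))
    (by
      intro X i x y
      fin_cases i <;>
        simp [LinearMap.add_comp, LinearMap.comp_add, LinearMap.sub_comp] <;> ring)
    (by
      intro X i r x
      fin_cases i <;>
        simp [LinearMap.smul_comp, LinearMap.comp_smul, LinearMap.sub_comp] <;> ring)

theorem sum_trace_basis (B : AlternatingMap ℝ V ℝ (Fin 3)) (Bo : V → V →ₗ[ℝ] V)
    (hBo : ∀ X Y Z : V, ⟪Bo X Y, Z⟫ = 2 * B ![X, Y, Z])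
    (ν : AlternatingMap ℝ V ℝ (Fin 4)) (νo : V → V → V →ₗ[ℝ] V)
    (hνo : ∀ X Y Z W : V, ⟪νo X Y Z, W⟫ = 2 * ν ![X, Y, Z, W])
    (e : OrthonormalBasis (Fin 4) ℝ V) :
    ∑ σ : Equiv.Perm (Fin 4), ((Equiv.Perm.sign σ : ℤ) : ℝ) *
        LinearMap.trace ℝ V
          ((Bo (e (σ 0)) ∘ₗ Bo (e (σ 1)) - Bo (e (σ 1)) ∘ₗ Bo (e (σ 0))) ∘ₗ
            νo (e (σ 2)) (e (σ 3))) =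
      -192 * (∑ p : Fin 4, B (e ∘ p.succAbove) ^ 2) * ν e := by
  have h1 := sum_quadratic (ι := Equiv.Perm (Fin 4) × Fin 4 × Fin 4 × Fin 4)
    (fun p x => hodgeCoeff p (x.1 0) x.2.2.1 x.2.1)
    (fun q x => hodgeCoeff q (x.1 1) x.2.2.2 x.2.2.1)
    (fun x => Equiv.Perm.sign x.1 * leviCivita (x.1 2) (x.1 3) x.2.1 x.2.2.2)
    (fun p => B (e ∘ p.succAbove)) (-12)
    (fun p q => by simpa only [Fintype.sum_prod_type] using contraction_eq p q)
  have h2 := sum_quadratic (ι := Equiv.Perm (Fin 4) × Fin 4 × Fin 4 × Fin 4)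
    (fun p x => hodgeCoeff p (x.1 1) x.2.2.1 x.2.1)
    (fun q x => hodgeCoeff q (x.1 0) x.2.2.2 x.2.2.1)
    (fun x => Equiv.Perm.sign x.1 * leviCivita (x.1 2) (x.1 3) x.2.1 x.2.2.2)
    (fun p => B (e ∘ p.succAbove)) 12
    (fun p q => by simpa only [Fintype.sum_prod_type] using contraction_swap_eq p q)
  simp only [← three_form_apply_basis B e, Fintype.sum_prod_type] at h1 h2
  -- The factor `8` collects the `2`s in the definitions of `Bo` (twice) and `νo` (once).
  have key : ∀ S : ℝ, S = 8 * ν e * (-12 * ∑ p : Fin 4, B (e ∘ p.succAbove) ^ 2) -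
      8 * ν e * (12 * ∑ p : Fin 4, B (e ∘ p.succAbove) ^ 2) →
      S = -192 * (∑ p : Fin 4, B (e ∘ p.succAbove) ^ 2) * ν e := by
    intro S hS
    rw [hS]
    ring
  apply key
  push_cast at h1 h2
  rw [← h1, ← h2]
  simp only [Finset.mul_sum, ← Finset.sum_sub_distrib, LinearMap.sub_comp, map_sub,
    trace_comp_comp e, hBo, hνo, four_form_apply_basis ν e]
  refine Finset.sum_congr rfl fun σ _ => Finset.sum_congr rfl fun a _ =>
    Finset.sum_congr rfl fun b _ => Finset.sum_congr rfl fun c _ => by ring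

theorem norm_sq_eq (B : AlternatingMap ℝ V ℝ (Fin 3)) (e : Fin 4 → V) :
    ∑ i : Fin 4, ∑ j ∈ Finset.Ioi i, ∑ k ∈ Finset.Ioi j, B ![e i, e j, e k] ^ 2 =
      ∑ p : Fin 4, B (e ∘ p.succAbove) ^ 2 := by
  have h : ∀ p : Fin 4, e ∘ p.succAbove =
      ![e (p.succAbove 0), e (p.succAbove 1), e (p.succAbove 2)] := by
    intro p; ext x; fin_cases x <;> rfl
  have h0 : Finset.Ioi (0 : Fin 4) = {1, 2, 3} := by decide
  have h1 : Finset.Ioi (1 : Fin 4) = {2, 3} := by decide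
  have h2 : Finset.Ioi (2 : Fin 4) = {3} := by decide
  have h3 : Finset.Ioi (3 : Fin 4) = ∅ := by decide
  simp only [h]
  simp [Fin.sum_univ_four, h0, h1, h2, h3, Fin.succAbove]
  ring

end

/-- `tr(B_o²·(dB)_o) = −48|B|²·dB` in dimension 4. For an alternating
trilinear form `B` and alternating 4-form `ν` on a 4-dimensional real inner product space,
with `B_o`, `ν_o` as usual and `B_o²(X,Y) = [B_o(X), B_o(Y)]`, the 4-form `tr(B_o²∧ν_o)`
equals `−48·|B|²·ν`, where `|B|² = Σ_{i<j<k} B(e_i,e_j,e_k)²`. -/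
theorem trace_wedge_Bo_sq_nu_o
    (V : Type*) [NormedAddCommGroup V] [InnerProductSpace ℝ V]
    (hdim : Module.finrank ℝ V = 4)
    (B : AlternatingMap ℝ V ℝ (Fin 3))
    (Bo : V → V →ₗ[ℝ] V)
    (hBo : ∀ X Y Z : V, ⟪Bo X Y, Z⟫ = 2 * B ![X, Y, Z])
    (ν : AlternatingMap ℝ V ℝ (Fin 4))
    (νo : V → V → V →ₗ[ℝ] V)
    (hνo : ∀ X Y Z W : V, ⟪νo X Y Z, W⟫ = 2 * ν ![X, Y, Z, W])
    (e : OrthonormalBasis (Fin 4) ℝ V) :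
    ∀ X : Fin 4 → V,
      (1 / 4 : ℝ) * ∑ σ : Equiv.Perm (Fin 4),
          ((Equiv.Perm.sign σ : ℤ) : ℝ) *
            LinearMap.trace ℝ V
              ((Bo (X (σ 0)) ∘ₗ Bo (X (σ 1)) - Bo (X (σ 1)) ∘ₗ Bo (X (σ 0))) ∘ₗ
                νo (X (σ 2)) (X (σ 3))) =
        -48 * (∑ i : Fin 4, ∑ j ∈ Finset.Ioi i, ∑ k ∈ Finset.Ioi j,
            B ![e i, e j, e k] ^ 2) * ν X := by
  intro X
  have ext_inner : ∀ F G : V →ₗ[ℝ] V, (∀ Y Z, ⟪F Y, Z⟫ = ⟪G Y, Z⟫) → F = G := fun F G h =>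
    LinearMap.ext fun Y => ext_inner_right ℝ (h Y)
  -- Nondegeneracy of the inner product makes `Bo` and `νo` linear in their form arguments.
  let L : V →ₗ[ℝ] V →ₗ[ℝ] V :=
    { toFun := Bo
      map_add' := fun x y => ext_inner _ _ fun Y Z => by
        have := B.map_vecCons_add ![Y, Z] x y
        simp only [LinearMap.add_apply, inner_add_left, hBo]
        linarith
      map_smul' := fun r x => ext_inner _ _ fun Y Z => by
        have := B.map_vecCons_smul ![Y, Z] r x
        simp only [LinearMap.smul_apply, inner_smul_left, hBo, RingHom.id_apply, this,
          smul_eq_mul, conj_trivial]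
        ring }
  have hsw : ∀ x y z w, ν ![x, y, z, w] = - ν ![y, x, z, w] := by
    intro x y z w
    have h := ν.map_swap ![y, x, z, w] (i := 0) (j := 1) (by decide)
    rw [← h]
    congr 1
    ext i; fin_cases i <;> rfl
  let N : V →ₗ[ℝ] V →ₗ[ℝ] V →ₗ[ℝ] V := LinearMap.mk₂ ℝ νo
    (fun x y z => ext_inner _ _ fun Y Z => by
      have := ν.map_vecCons_add ![z, Y, Z] x y
      simp only [LinearMap.add_apply, inner_add_left, hνo]
      linarith)
    (fun r x z => ext_inner _ _ fun Y Z => by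
      have := ν.map_vecCons_smul ![z, Y, Z] r x
      simp only [LinearMap.smul_apply, inner_smul_left, hνo, this, smul_eq_mul, conj_trivial]
      ring)
    (fun z x y => ext_inner _ _ fun Y Z => by
      have := ν.map_vecCons_add ![z, Y, Z] x y
      simp only [LinearMap.add_apply, inner_add_left, hνo, hsw z]
      linarith)
    (fun r z x => ext_inner _ _ fun Y Z => by
      have := ν.map_vecCons_smul ![z, Y, Z] r x
      simp only [LinearMap.smul_apply, inner_smul_left, hνo, hsw z, this, smul_eq_mul,
        conj_trivial]
      ring)
  let A : AlternatingMap ℝ V ℝ (Fin 4) := MultilinearMap.alternatization (traceTensor L N)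
  have hA : ∀ Y : Fin 4 → V, A Y = ∑ σ : Equiv.Perm (Fin 4), ((Equiv.Perm.sign σ : ℤ) : ℝ) *
      LinearMap.trace ℝ V
        ((Bo (Y (σ 0)) ∘ₗ Bo (Y (σ 1)) - Bo (Y (σ 1)) ∘ₗ Bo (Y (σ 0))) ∘ₗ
          νo (Y (σ 2)) (Y (σ 3))) := by
    intro Y
    simp only [A, MultilinearMap.alternatization_apply, Units.smul_def, zsmul_eq_mul]
    rfl
  have hAe := (hA e).trans (sum_trace_basis B Bo hBo ν νo hνo e)
  have h1 := congrArg (fun f => f X) (A.eq_smul_basis_det e.toBasis)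
  have h2 := congrArg (fun f => f X) (ν.eq_smul_basis_det e.toBasis)
  simp only [AlternatingMap.smul_apply, OrthonormalBasis.coe_toBasis, smul_eq_mul] at h1 h2
  rw [← hA X, norm_sq_eq, h1, h2, hAe]
  ring
end

section
/- Let V be a 6-dimensional real inner product space, Q the quadratic form Q(v) = −‖v‖² on V, Cl(V) the Clifford algebra of (V,Q), and λ : Cl(V) → ΛV the canonical linear isomorphism with the exterior algebra (the Clifford symbol map). If c ∈ Cl(V) satisfies λ(c) ∈ Λ⁴V, then λ(c·c) has nonzero graded components only in degrees 0 and 4; in particular, the degree-2 and degree-6 graded components of λ(c·c) are zero. -/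
/-!
Reversal is an anti-automorphism of `Cl(V)` acting on `Λᵏ` by `(-1)^(k choose 2)`, and the grade
involution is an automorphism acting on `Λᵏ` by `(-1)^k`. The symbol map intertwines both with the
corresponding maps of the exterior algebra (`changeForm_reverse`, `changeForm_involute`); for
reversal this uses that the bilinear form associated with `-Q` is symmetric. A symbol of degree 4 is fixed by both
maps, hence so are `c` and `c * c`. Fixedness under the grade involution kills the odd components
of the symbol of `c * c`, fixedness under reversal kills those of degrees 2 and 6, and degrees
above 6 vanish because `dim V = 6`.
-/

open CliffordAlgebra
namespace CliffSq
variable {R M : Type*} [CommRing R] [AddCommGroup M] [Module R M] {Q Q' : QuadraticForm R M}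

/-- Contraction is odd, so it anticommutes with the grade involution. -/
theorem contractLeft_involute (d : Module.Dual R M) (x : CliffordAlgebra Q) :
    contractLeft d (involute x) = -involute (contractLeft d x) := by
  induction x using CliffordAlgebra.left_induction with
  | algebraMap => simp
  | add _ _ hx hy => rw [map_add, map_add, map_add, map_add, hx, hy, neg_add]
  | ι_mul y m hy =>
    simp only [map_mul, involute_ι, neg_mul, map_neg, contractLeft_ι_mul, hy, map_sub, map_smul,
      mul_neg]

/-- The graded Leibniz rule for left contraction, with the vector as the right factor. -/
theorem contractLeft_mul_ι (d : Module.Dual R M) (x : CliffordAlgebra Q) (m : M) :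
    contractLeft d (x * ι Q m) = contractLeft d x * ι Q m + d m • involute x := by
  induction x using CliffordAlgebra.left_induction with
  | algebraMap r =>
    rw [contractLeft_algebraMap_mul, contractLeft_ι, contractLeft_algebraMap, zero_mul, zero_add,
      AlgHom.commutes, Algebra.smul_def, Algebra.commutes]
  | add _ _ hx hy => simp only [add_mul, map_add, hx, hy, smul_add]; abel
  | ι_mul y a hy =>
    simp only [mul_assoc, contractLeft_ι_mul, hy, map_mul, involute_ι, sub_mul, mul_add,
      smul_mul_assoc, mul_smul_comm, neg_mul, smul_neg]
    abel

theorem contractRight_ι_mul (d : Module.Dual R M) (x : CliffordAlgebra Q) (m : M) :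
    contractRight (ι Q m * x) d = ι Q m * contractRight x d + d m • involute x := by
  simp [contractRight_eq, reverse.map_mul, contractLeft_mul_ι, reverse_involute]

/-- Left and right contractions commute. -/
theorem contractRight_contractLeft (d d' : Module.Dual R M) (x : CliffordAlgebra Q) :
    contractRight (contractLeft d x) d' = contractLeft d (contractRight x d') := by
  induction x using CliffordAlgebra.left_induction with
  | algebraMap r => simp
  | add _ _ hx hy => simp only [map_add, LinearMap.add_apply, hx, hy]
  | ι_mul y a hy =>
    simp only [contractLeft_ι_mul, contractRight_ι_mul, map_sub, map_add, map_smul,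
      LinearMap.sub_apply, LinearMap.smul_apply, hy, contractLeft_involute, smul_neg]
    abel

/-- Right-handed version of `CliffordAlgebra.changeForm_ι_mul`. Left multiplication by `a` and
right multiplication by `m` produce the cross terms `B a m` and `B m a`, so symmetry of `B` is
needed. -/
theorem changeForm_mul_ι {B : LinearMap.BilinForm R M} (h : B.toQuadraticMap = Q' - Q)
    (hB : ∀ a b, B a b = B b a) (x : CliffordAlgebra Q) (m : M) :
    changeForm h (x * ι Q m) =
      changeForm h x * ι Q' m - contractRight (changeForm h x) (B m) := by
  induction x using CliffordAlgebra.left_induction with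
  | algebraMap r => simp [← Algebra.smul_def]
  | add _ _ hx hy => simp only [add_mul, map_add, LinearMap.add_apply, hx, hy]; abel
  | ι_mul y a hy =>
    simp only [mul_assoc, changeForm_ι_mul, hy, map_sub, LinearMap.sub_apply, contractRight_ι_mul,
      contractLeft_mul_ι, contractRight_contractLeft, hB a m, mul_sub, sub_mul]
    abel

theorem changeForm_reverse {B : LinearMap.BilinForm R M} (h : B.toQuadraticMap = Q' - Q)
    (hB : ∀ a b, B a b = B b a) (x : CliffordAlgebra Q) :
    changeForm h (reverse x) = reverse (changeForm h x) := by
  induction x using CliffordAlgebra.left_induction with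
  | algebraMap r => simp
  | add _ _ hx hy => simp only [map_add, hx, hy]
  | ι_mul y a hy =>
    simp [reverse.map_mul, changeForm_mul_ι h hB, changeForm_ι_mul, hy, contractRight_eq]

theorem changeForm_involute {B : LinearMap.BilinForm R M} (h : B.toQuadraticMap = Q' - Q)
    (x : CliffordAlgebra Q) :
    changeForm h (involute x) = involute (changeForm h x) := by
  induction x using CliffordAlgebra.left_induction with
  | algebraMap r => simp
  | add _ _ hx hy => simp only [map_add, hx, hy]
  | ι_mul y a hy =>
    simp only [map_mul, involute_ι, neg_mul, map_neg, changeForm_ι_mul, hy, contractLeft_involute,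
      map_sub]
    abel

/-- Moving a vector across `x` in the exterior algebra costs the grade involution of `x`. -/
theorem exterior_mul_ι (x : ExteriorAlgebra R M) (m : M) :
    x * ExteriorAlgebra.ι R m = ExteriorAlgebra.ι R m * involute x := by
  induction x using CliffordAlgebra.left_induction with
  | algebraMap r => simp [Algebra.commutes]
  | add _ _ hx hy => simp only [add_mul, mul_add, map_add, hx, hy]
  | ι_mul y a hy =>
    have := ExteriorAlgebra.ι_add_mul_swap (R := R) a m
    change ExteriorAlgebra.ι R a * y * _ = _ * involute (ExteriorAlgebra.ι R a * y)
    have h2 : involute (ExteriorAlgebra.ι R a) = - ExteriorAlgebra.ι R a := involute_ι a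
    rw [mul_assoc, hy, map_mul, h2, neg_mul, mul_neg, ← mul_assoc, ← mul_assoc, ← neg_mul,
      eq_neg_of_add_eq_zero_left this]

theorem involute_of_mem_exteriorPower {k : ℕ} {x : ExteriorAlgebra R M} (hx : x ∈ ⋀[R]^k M) :
    involute x = (-1 : R) ^ k • x := by
  induction hx using Submodule.pow_induction_on_left' with
  | algebraMap r => simp
  | add x y i hx hy h1 h2 => simp only [map_add, smul_add, h1, h2]
  | mem_mul m hm i x hx h =>
    obtain ⟨m, rfl⟩ := hm
    have h2 : involute (ExteriorAlgebra.ι R m) = - ExteriorAlgebra.ι R m := involute_ι m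
    rw [map_mul, h, h2, pow_succ]
    simp

/-- Reversing `k` anticommuting factors takes `k.choose 2` transpositions. -/
theorem reverse_of_mem_exteriorPower {k : ℕ} {x : ExteriorAlgebra R M} (hx : x ∈ ⋀[R]^k M) :
    reverse x = (-1 : R) ^ (k.choose 2) • x := by
  induction hx using Submodule.pow_induction_on_left' with
  | algebraMap r => simp
  | add x y i hx hy h1 h2 => simp only [map_add, smul_add, h1, h2]
  | mem_mul m hm i x hx h =>
    obtain ⟨m, rfl⟩ := hm
    have h2 : reverse (ExteriorAlgebra.ι R m) = ExteriorAlgebra.ι R m := reverse_ι m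
    rw [reverse.map_mul, h, h2, smul_mul_assoc, exterior_mul_ι, involute_of_mem_exteriorPower hx,
      Nat.succ_eq_add_one, Nat.choose_succ_succ' i 1, pow_add]
    simp [smul_smul, mul_comm]

/-- A linear map acting on each degree `k` by a scalar `s k` commutes with the projections up
to these scalars. -/
theorem proj_apply_of_scalar_on_degrees
    (f : ExteriorAlgebra R M →ₗ[R] ExteriorAlgebra R M) (s : ℕ → R)
    (hf : ∀ k, ∀ x ∈ ⋀[R]^k M, f x = s k • x) (i : ℕ) (x : ExteriorAlgebra R M) :
    GradedAlgebra.proj (fun i : ℕ => ⋀[R]^i M) i (f x) =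
      s i • GradedAlgebra.proj (fun i : ℕ => ⋀[R]^i M) i x := by
  induction x using DirectSum.Decomposition.inductionOn (fun i : ℕ => ⋀[R]^i M) with
  | zero => simp
  | add x y hx hy => simp only [map_add, hx, hy, smul_add]
  | @homogeneous k x =>
    rw [hf k x x.2, map_smul]
    by_cases hk : k = i
    · subst hk
      rfl
    · simp [GradedAlgebra.proj_apply, DirectSum.of_eq_of_ne _ _ _ (Ne.symm hk)]

theorem exteriorPower_eq_bot {K V : Type*} [Field K] [AddCommGroup V] [Module K V]
    [Module.Finite K V] {i : ℕ} (hi : Module.finrank K V < i) : ⋀[K]^i V = ⊥ := by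
  rw [← Submodule.finrank_eq_zero (R := K), exteriorPower.finrank_eq, Nat.choose_eq_zero_of_lt hi]

/-- If a linear map acting by `-1` on degree `i` fixes `z`, then `z` has no component of
degree `i`. -/
theorem proj_eq_zero_of_fixed {V : Type*} [AddCommGroup V] [Module ℝ V]
    (f : ExteriorAlgebra ℝ V →ₗ[ℝ] ExteriorAlgebra ℝ V) (s : ℕ → ℝ)
    (hf : ∀ k, ∀ x ∈ ⋀[ℝ]^k V, f x = s k • x) {i : ℕ} (hs : s i = -1)
    {z : ExteriorAlgebra ℝ V} (hz : f z = z) :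
    GradedAlgebra.proj (fun i : ℕ => ⋀[ℝ]^i V) i z = 0 := by
  have h := proj_apply_of_scalar_on_degrees f s hf i z
  rw [hz, hs, neg_one_smul] at h
  have : IsAddTorsionFree (ExteriorAlgebra ℝ V) := .of_isTorsionFree ℝ _
  exact self_eq_neg.mp h

end CliffSq

/-- in a 6-dimensional real inner product space with Clifford algebra of the
quadratic form `Q(v) = −‖v‖²`, the Clifford square of an element whose Clifford symbol is a
4-form has symbol with nonzero graded components only in degrees 0 and 4; in particular its
degree-2 and degree-6 components vanish. -/
theorem clifford_square_of_four_form_dim_six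
    (V : Type*) [NormedAddCommGroup V] [InnerProductSpace ℝ V]
    (hdim : Module.finrank ℝ V = 6)
    (Q : QuadraticForm ℝ V) (hQ : ∀ v : V, Q v = -‖v‖ ^ 2)
    (c : CliffordAlgebra Q)
    (hc : CliffordAlgebra.equivExterior Q c ∈ (⋀[ℝ]^4 V : Submodule ℝ (ExteriorAlgebra ℝ V))) :
    (∀ i : ℕ, i ∉ ({0, 4} : Set ℕ) →
        GradedAlgebra.proj (fun i : ℕ => (⋀[ℝ]^i V : Submodule ℝ (ExteriorAlgebra ℝ V))) i
          (CliffordAlgebra.equivExterior Q (c * c)) = 0) ∧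
      GradedAlgebra.proj (fun i : ℕ => (⋀[ℝ]^i V : Submodule ℝ (ExteriorAlgebra ℝ V))) 2
          (CliffordAlgebra.equivExterior Q (c * c)) = 0 ∧
      GradedAlgebra.proj (fun i : ℕ => (⋀[ℝ]^i V : Submodule ℝ (ExteriorAlgebra ℝ V))) 6
          (CliffordAlgebra.equivExterior Q (c * c)) = 0 := by
  have hfin : Module.Finite ℝ V := Module.finite_of_finrank_pos (by omega)
  have hsymm : ∀ a b, QuadraticMap.associated (R := ℝ) (-Q) a b =
      QuadraticMap.associated (R := ℝ) (-Q) b a := fun a b =>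
    QuadraticMap.associated_isSymm ℝ (-Q) a b
  have hrev : ∀ x : CliffordAlgebra Q,
      CliffordAlgebra.equivExterior Q (reverse x) = reverse (CliffordAlgebra.equivExterior Q x) :=
    CliffSq.changeForm_reverse changeForm.associated_neg_proof hsymm
  have hinv : ∀ x : CliffordAlgebra Q,
      CliffordAlgebra.equivExterior Q (involute x) = involute (CliffordAlgebra.equivExterior Q x) :=
    CliffSq.changeForm_involute changeForm.associated_neg_proof
  have hcr : reverse c = c := by
    apply (CliffordAlgebra.equivExterior Q).injective
    rw [hrev, CliffSq.reverse_of_mem_exteriorPower hc]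
    norm_num [Nat.choose]
  have hci : involute c = c := by
    apply (CliffordAlgebra.equivExterior Q).injective
    rw [hinv, CliffSq.involute_of_mem_exteriorPower hc]
    norm_num
  have hzr : reverse (CliffordAlgebra.equivExterior Q (c * c)) =
      CliffordAlgebra.equivExterior Q (c * c) := by
    rw [← hrev, reverse.map_mul, hcr]
  have hzi : involute (CliffordAlgebra.equivExterior Q (c * c)) =
      CliffordAlgebra.equivExterior Q (c * c) := by
    rw [← hinv, map_mul, hci]
  have key : ∀ i : ℕ, i ∉ ({0, 4} : Set ℕ) →
        GradedAlgebra.proj (fun i : ℕ => (⋀[ℝ]^i V : Submodule ℝ (ExteriorAlgebra ℝ V))) i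
          (CliffordAlgebra.equivExterior Q (c * c)) = 0 := by
    intro i hi
    rcases lt_or_ge 6 i with h6 | h6
    · have hmem : GradedAlgebra.proj (fun i : ℕ => ⋀[ℝ]^i V) i
          (CliffordAlgebra.equivExterior Q (c * c)) ∈ ⋀[ℝ]^i V := SetLike.coe_mem _
      rwa [CliffSq.exteriorPower_eq_bot (hdim.trans_lt h6), Submodule.mem_bot] at hmem
    · rcases Nat.even_or_odd i with he | ho
      · refine CliffSq.proj_eq_zero_of_fixed reverse (fun k => (-1) ^ k.choose 2)
          (fun k x hx => CliffSq.reverse_of_mem_exteriorPower hx) ?_ hzr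
        have h26 : i = 2 ∨ i = 6 := by
          simp only [Set.mem_insert_iff, Set.mem_singleton_iff] at hi
          grind
        rcases h26 with rfl | rfl <;> norm_num [Nat.choose]
      · exact CliffSq.proj_eq_zero_of_fixed involute.toLinearMap (fun k => (-1) ^ k)
          (fun k x hx => CliffSq.involute_of_mem_exteriorPower hx) ho.neg_one_pow hzi
  exact ⟨key, key 2 (by simp), key 6 (by simp)⟩
end
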